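/- arXiv:1607.01262 — 2 statements merged into one kernel-verified Lean document; each statement's English description precedes it below -/
import Mathlib

section
/- Let h > 0, let v = (r, c, d) ∈ ℝ³ and let w ∈ ℝ³ be linearly independent from v. Suppose the numerical wall W_w(v) is the semicircle {(α, β) : α > 0 and α² + (β − s)² = ρ²} for some s ∈ ℝ and ρ > 0. Then the radius ρ and center s satisfy (h·r)²·ρ² + Δ̄(v) = (h·r·s − c)², where Δ̄(v) = c² − 2·h·r·d. -/
namespace BridgelandNotes

/-- The central charge `Z_{α,β}(v)` for `v = (r, c, d)`, where `h` plays the role of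
`H²`:  `Z_{α,β}(v) = (−d + β·c + ((α² − β²)/2)·h·r) + i·α·(c − β·h·r)`. -/
noncomputable def centralCharge (h : ℝ) (v : ℝ × ℝ × ℝ) (α β : ℝ) : ℂ :=
  ⟨-v.2.2 + β * v.2.1 + ((α ^ 2 - β ^ 2) / 2) * h * v.1,
    α * (v.2.1 - β * h * v.1)⟩

/-- The numerical wall `W_w(v)` in the `(α, β)`-plane:
`{(α, β) : α > 0 and Re Z_{α,β}(v)·Im Z_{α,β}(w) = Re Z_{α,β}(w)·Im Z_{α,β}(v)}`. -/
noncomputable def numericalWall (h : ℝ) (v w : ℝ × ℝ × ℝ) : Set (ℝ × ℝ) :=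
  {p : ℝ × ℝ | 0 < p.1 ∧
    (centralCharge h v p.1 p.2).re * (centralCharge h w p.1 p.2).im =
      (centralCharge h w p.1 p.2).re * (centralCharge h v p.1 p.2).im}

/-- The discriminant `Δ̄(v) = c² − 2·h·r·d` for `v = (r, c, d)`. -/
def disc (h : ℝ) (v : ℝ × ℝ × ℝ) : ℝ := v.2.1 ^ 2 - 2 * h * v.1 * v.2.2

/-- The radius `ρ` and center `s` of a semicircular numerical wall for `v = (r, c, d)`
satisfy `(h·r)²·ρ² + Δ̄(v) = (h·r·s − c)²`. -/
theorem radius_center_relation (h : ℝ) (hh : 0 < h)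
    (v w : ℝ × ℝ × ℝ) (hvw : LinearIndependent ℝ ![v, w]) (s ρ : ℝ) (hρ : 0 < ρ)
    (hW : numericalWall h v w =
      {p : ℝ × ℝ | 0 < p.1 ∧ p.1 ^ 2 + (p.2 - s) ^ 2 = ρ ^ 2}) :
    (h * v.1) ^ 2 * ρ ^ 2 + disc h v = (h * v.1 * s - v.2.1) ^ 2 := by
  obtain ⟨r, c, d⟩ := v
  obtain ⟨R, C, D⟩ := w
  have key : ∀ α β : ℝ, 0 < α →
      ((c * D - C * d) - h * (r * D - R * d) * β
        + h * (r * C - R * c) * (α ^ 2 + β ^ 2) / 2 = 0 ↔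
        α ^ 2 + (β - s) ^ 2 = ρ ^ 2) := by
    intro α β hα
    have h1 := Set.ext_iff.mp hW (α, β)
    simp only [numericalWall, centralCharge, Set.mem_ofPred_eq, hα, true_and] at h1
    rw [← h1]
    constructor
    · intro h2
      linear_combination α * h2
    · intro h2
      apply mul_left_cancel₀ hα.ne'
      linear_combination h2
  have e1 := (key ρ s hρ).2 (by ring)
  have e2 := (key (3 / 5 * ρ) (s + 4 / 5 * ρ) (by positivity)).2 (by ring)
  have hy : r * D - R * d = (r * C - R * c) * s := by
    apply mul_left_cancel₀ (mul_pos hh hρ).ne'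
    linear_combination (5 / 4) * (e1 - e2)
  have hz : c * D - C * d = -(h * (r * C - R * c) * (ρ ^ 2 - s ^ 2) / 2) := by
    rw [hy] at e1
    linear_combination e1
  have hx : r * C - R * c ≠ 0 := by
    intro hx
    have e3 := (key (2 * ρ) s (by positivity)).1 (by rw [hz, hy, hx]; ring)
    nlinarith [pow_pos hρ 2]
  have hf : h * r * (ρ ^ 2 - s ^ 2) + 2 * c * s - 2 * d = 0 := by
    apply mul_left_cancel₀ hx
    linear_combination (2 * r) * hz - 2 * c * hy
  simp only [disc]
  linear_combination h * r * hf

end BridgelandNotes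
end

section
/- Let A be a finite-dimensional associative ℂ-algebra, and let Z assign to every finite-dimensional (right) A-module M a complex number, additively on short exact sequences of finite-dimensional A-modules (Z(M) = Z(M′) + Z(M″) whenever 0 → M′ → M → M″ → 0 is exact), such that every nonzero finite-dimensional A-module M satisfies Im Z(M) ≥ 0, and Im Z(M) = 0 implies Re Z(M) < 0. Then every nonzero finite-dimensional A-module M admits a Harder–Narasimhan filtration: a finite chain of submodules 0 = M₀ ⊊ M₁ ⊊ … ⊊ Mₙ = M such that each subquotient A_i = M_i/M_{i−1} is Z-semistable and μ(A₁) > μ(A₂) > … > μ(Aₙ). -/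
namespace BridgelandNotes

/-- For a central charge `Z` on finite-dimensional right `A`-modules (encoded as
left `Aᵐᵒᵖ`-modules; over the finite-dimensional `ℂ`-algebra `A`, finite-dimensional
is the same as finitely generated), a nonzero module `M` is `Z`-semistable if
`μ(N) ≤ μ(M)`, i.e. `D(N)·R(M) ≤ D(M)·R(N)`, for every nonzero proper submodule
`N ⊆ M`, where `R = Im ∘ Z` and `D = −Re ∘ Z`. -/
def ModuleSemistable {A : Type} [Ring A]
    (Z : (M : Type) → [AddCommGroup M] → [Module Aᵐᵒᵖ M] → ℂ)
    (M : Type) [AddCommGroup M] [Module Aᵐᵒᵖ M] : Prop :=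
  Nontrivial M ∧
    ∀ N : Submodule Aᵐᵒᵖ M, N ≠ ⊥ → N ≠ ⊤ →
      -(Z N).re * (Z M).im ≤ -(Z M).re * (Z N).im

/-- The subquotient `M₂/M₁` for nested submodules `M₁ ≤ M₂` of `M`. -/
abbrev subquotient {A : Type} [Ring A] {M : Type} [AddCommGroup M] [Module Aᵐᵒᵖ M]
    (N₁ N₂ : Submodule Aᵐᵒᵖ M) : Type :=
  N₂ ⧸ (N₁.comap N₂.subtype)

/-- Slope with values in `WithTop ℝ`. -/
noncomputable def slp (w : ℂ) : WithTop ℝ :=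
  if w.im = 0 then ⊤ else ((-w.re / w.im : ℝ) : WithTop ℝ)

/-- The semi-closed upper half plane. -/
def Pos (w : ℂ) : Prop := 0 ≤ w.im ∧ (w.im = 0 → w.re < 0)

theorem slp_le_iff {u v : ℂ} (hu : Pos u) (hv : Pos v) :
    slp u ≤ slp v ↔ -u.re * v.im ≤ -v.re * u.im := by
  obtain ⟨hu0, hu⟩ := hu
  obtain ⟨hv0, hv⟩ := hv
  unfold slp
  by_cases h1 : v.im = 0
  · have := hv h1
    simp only [h1, if_true, le_top, mul_zero, true_iff]
    nlinarith
  · have hv' : 0 < v.im := lt_of_le_of_ne hv0 (Ne.symm h1)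
    by_cases h2 : u.im = 0
    · have := hu h2
      simp only [h1, h2, if_true, if_false, top_le_iff, WithTop.coe_ne_top, false_iff, mul_zero,
        not_le]
      nlinarith
    · have hu' : 0 < u.im := lt_of_le_of_ne hu0 (Ne.symm h2)
      simp only [h1, h2, if_false, WithTop.coe_le_coe]
      exact div_le_div_iff₀ hu' hv'

theorem Pos.add {u v : ℂ} (hu : Pos u) (hv : Pos v) : Pos (u + v) := by
  obtain ⟨hu0, hu⟩ := hu
  obtain ⟨hv0, hv⟩ := hv
  refine ⟨by simpa using add_nonneg hu0 hv0, fun h => ?_⟩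
  simp only [Complex.add_im, Complex.add_re] at *
  have := hu (by linarith)
  have := hv (by linarith)
  linarith

theorem values_finite {L : Type*} [Lattice L] [BoundedOrder L] [WellFoundedLT L]
    [WellFoundedGT L] (z : L → ℂ)
    (hmod : ∀ a b, z a + z b = z (a ⊔ b) + z (a ⊓ b)) (x : L) :
    (z '' Set.Iic x).Finite := by
  induction x using WellFoundedLT.induction with
  | ind x ih =>
    by_cases hx : x = ⊥
    · subst hx; simp
    · have hne : (Set.Iio x).Nonempty := ⟨⊥, bot_lt_iff_ne_bot.2 hx⟩
      obtain ⟨c, hc, hmax⟩ := WellFounded.has_min (wellFounded_gt (α := L)) _ hne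
      have hc : c < x := hc
      refine (((ih c hc).union ((ih c hc).image fun w => z x - z c + w)).union
        (Set.finite_singleton (z x))).subset ?_
      rintro _ ⟨y, hy, rfl⟩
      have hy : y ≤ x := hy
      by_cases hyc : y ≤ c
      · exact Or.inl (Or.inl ⟨y, hyc, rfl⟩)
      · have hs : y ⊔ c = x := by
          by_contra hne
          exact hmax (y ⊔ c) (lt_of_le_of_ne (sup_le hy hc.le) hne)
            (lt_of_le_of_ne le_sup_right (fun h => hyc (by rw [h]; exact le_sup_left)))
        have := hmod y c
        rw [hs] at this
        refine Or.inl (Or.inr ⟨z (y ⊓ c), ⟨y ⊓ c, inf_le_right, rfl⟩, ?_⟩)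
        linear_combination -this

theorem next_exists {L : Type*} [Lattice L] [BoundedOrder L] [WellFoundedLT L]
    [WellFoundedGT L] (z : L → ℂ)
    (hmod : ∀ a b, z a + z b = z (a ⊔ b) + z (a ⊓ b)) (a : L) (ha : a ≠ ⊤) :
    ∃ b, a < b ∧ (∀ c, a < c → slp (z c - z a) ≤ slp (z b - z a)) ∧
      ∀ c, b < c → slp (z c - z a) < slp (z b - z a) := by
  have hfin : ((fun c => slp (z c - z a)) '' Set.Ioi a).Finite := by
    refine ((values_finite z hmod ⊤).image (fun w => slp (w - z a))).subset ?_
    rintro _ ⟨c, -, rfl⟩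
    exact ⟨z c, ⟨c, le_top, rfl⟩, rfl⟩
  have hne : ((fun c => slp (z c - z a)) '' Set.Ioi a).Nonempty :=
    ⟨_, ⊤, lt_top_iff_ne_top.2 ha, rfl⟩
  obtain ⟨_, ⟨b0, hb0, rfl⟩, hb0max⟩ := Set.exists_max_image _ id hfin hne
  have hS : {b | a < b ∧ ∀ c, a < c → slp (z c - z a) ≤ slp (z b - z a)}.Nonempty :=
    ⟨b0, hb0, fun c hc => hb0max _ ⟨c, hc, rfl⟩⟩
  obtain ⟨b, ⟨hb, hbm⟩, hmax⟩ := WellFounded.has_min (wellFounded_gt (α := L)) _ hS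
  refine ⟨b, hb, hbm, fun c hc => ?_⟩
  by_contra hlt
  exact hmax c ⟨hb.trans hc, fun d hd => (hbm d hd).trans (not_lt.1 hlt)⟩ hc

theorem lattice_hn {L : Type*} [Lattice L] [BoundedOrder L] [WellFoundedLT L]
    [WellFoundedGT L] (z : L → ℂ)
    (hmod : ∀ a b, z a + z b = z (a ⊔ b) + z (a ⊓ b))
    (hpos : ∀ a b, a < b → Pos (z b - z a)) :
    ∃ (n : ℕ) (F : ℕ → L), F 0 = ⊥ ∧ F n = ⊤ ∧ (∀ i, i < n → F i < F (i + 1)) ∧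
      (∀ i, i < n → ∀ c, F i < c → c < F (i + 1) →
        -(z c - z (F i)).re * (z (F (i + 1)) - z (F i)).im ≤
        -(z (F (i + 1)) - z (F i)).re * (z c - z (F i)).im) ∧
      ∀ i, i + 1 < n →
        -(z (F (i + 2)) - z (F (i + 1))).re * (z (F (i + 1)) - z (F i)).im <
        -(z (F (i + 1)) - z (F i)).re * (z (F (i + 2)) - z (F (i + 1))).im := by
  classical
  choose nx h1 h2 h3 using next_exists z hmod
  let F : ℕ → L := fun i => Nat.rec (motive := fun _ => L) ⊥ (fun _ a => if h : a = ⊤ then ⊤ else nx a h) i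
  have hF0 : F 0 = ⊥ := rfl
  have hFs : ∀ i (h : F i ≠ ⊤), F (i + 1) = nx (F i) h := fun i h => dif_neg h
  have hex : ∃ n, F n = ⊤ := by
    by_contra hno
    push Not at hno
    have hm : StrictMono F := strictMono_nat_of_lt_succ fun i => by
      rw [hFs i (hno i)]; exact h1 _ _
    obtain ⟨_, ⟨k, rfl⟩, hk⟩ :=
      WellFounded.has_min (wellFounded_gt (α := L)) (Set.range F) ⟨_, 0, rfl⟩
    exact hk _ ⟨k + 1, rfl⟩ (hm (Nat.lt_succ_self k))
  obtain ⟨n, hn, hmin⟩ : ∃ n, F n = ⊤ ∧ ∀ i, i < n → F i ≠ ⊤ :=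
    ⟨_, Nat.find_spec hex, fun i hi => Nat.find_min hex hi⟩
  have hlt : ∀ i, i < n → F i < F (i + 1) := fun i hi => by
    rw [hFs i (hmin _ hi)]; exact h1 _ _
  refine ⟨n, F, hF0, hn, hlt, ?_, ?_⟩
  · intro i hi c hc hc'
    rw [← slp_le_iff (hpos _ _ hc) (hpos _ _ (hlt i hi)), hFs i (hmin _ hi)]
    exact h2 _ _ c hc
  · intro i hi
    have hi' : i < n := by omega
    have hu := hpos _ _ (hlt i hi')
    have hv := hpos _ _ (hlt (i + 1) hi)
    have hw := hpos _ _ ((hlt i hi').trans (hlt (i + 1) hi))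
    have key := h3 (F i) (hmin _ hi') (F (i + 2))
      (by rw [← hFs]; exact hlt (i + 1) hi)
    rw [← hFs, ← not_le, slp_le_iff hu hw, not_le] at key
    simp only [Complex.sub_re, Complex.sub_im] at key ⊢
    nlinarith

/-- Additivity on short exact sequences. -/
def ZAdd {A : Type} [Ring A]
    (Z : (M : Type) → [AddCommGroup M] → [Module Aᵐᵒᵖ M] → ℂ) : Prop :=
  ∀ (M₁ M₂ M₃ : Type)
      [AddCommGroup M₁] [Module Aᵐᵒᵖ M₁] [Module.Finite Aᵐᵒᵖ M₁]
      [AddCommGroup M₂] [Module Aᵐᵒᵖ M₂] [Module.Finite Aᵐᵒᵖ M₂]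
      [AddCommGroup M₃] [Module Aᵐᵒᵖ M₃] [Module.Finite Aᵐᵒᵖ M₃]
      (f : M₁ →ₗ[Aᵐᵒᵖ] M₂) (g : M₂ →ₗ[Aᵐᵒᵖ] M₃),
      Function.Injective f → Function.Surjective g →
      LinearMap.range f = LinearMap.ker g → Z M₂ = Z M₁ + Z M₃

section Mods

variable {A : Type} [Ring A] [IsNoetherianRing Aᵐᵒᵖ]
    {Z : (M : Type) → [AddCommGroup M] → [Module Aᵐᵒᵖ M] → ℂ}
    {M : Type} [AddCommGroup M] [Module Aᵐᵒᵖ M] [Module.Finite Aᵐᵒᵖ M]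

theorem Z_subquot (hadd : ZAdd Z) {N₁ N₂ : Submodule Aᵐᵒᵖ M} (h : N₁ ≤ N₂) :
    Z (subquotient N₁ N₂) = Z N₂ - Z N₁ := by
  have := hadd N₁ N₂ (subquotient N₁ N₂) (Submodule.inclusion h) (Submodule.mkQ _)
    (Submodule.inclusion_injective h) (Submodule.mkQ_surjective _)
    (by rw [Submodule.ker_mkQ, Submodule.range_inclusion])
  rw [this]; ring

theorem Z_equiv (hadd : ZAdd Z) {M₁ M₂ : Type}
    [AddCommGroup M₁] [Module Aᵐᵒᵖ M₁] [Module.Finite Aᵐᵒᵖ M₁]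
    [AddCommGroup M₂] [Module Aᵐᵒᵖ M₂] [Module.Finite Aᵐᵒᵖ M₂]
    (e : M₁ ≃ₗ[Aᵐᵒᵖ] M₂) : Z M₁ = Z M₂ := by
  have h0 := hadd PUnit PUnit PUnit LinearMap.id LinearMap.id Function.injective_id
    Function.surjective_id (by ext x; simp)
  have h := hadd PUnit M₁ M₂ 0 e.toLinearMap
    (fun _ _ _ => rfl) e.surjective (by simp)
  have h0 : Z PUnit = 0 := by simpa using h0
  rw [h, h0, zero_add]

theorem Z_mod (hadd : ZAdd Z) (a b : Submodule Aᵐᵒᵖ M) :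
    Z a + Z b = Z ↥(a ⊔ b) + Z ↥(a ⊓ b) := by
  have h1 := Z_subquot hadd (inf_le_left : a ⊓ b ≤ a)
  have h2 := Z_subquot hadd (le_sup_right : b ≤ a ⊔ b)
  have e1 : (a ⊓ b).comap a.subtype = b.comap a.subtype := by ext x; simp
  have h3 : Z (subquotient (a ⊓ b) a) = Z (subquotient b (a ⊔ b)) :=
    Z_equiv hadd ((Submodule.quotEquivOfEq _ _ e1).trans
      ((Submodule.quotEquivOfEq _ _ e1.symm).trans
        (LinearMap.quotientInfEquivSupQuotient a b)))
  rw [h1, h2] at h3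
  linear_combination h3

theorem Z_sub_of_subquot (hadd : ZAdd Z) {N₁ N₂ : Submodule Aᵐᵒᵖ M} (h : N₁ ≤ N₂)
    (N : Submodule Aᵐᵒᵖ (subquotient N₁ N₂)) (hN0 : N ≠ ⊥) (hN1 : N ≠ ⊤) :
    ∃ c : Submodule Aᵐᵒᵖ M, N₁ < c ∧ c < N₂ ∧ Z N = Z c - Z N₁ := by
  set q := Submodule.mkQ (N₁.comap N₂.subtype) with hq
  have hqs : Function.Surjective q := Submodule.mkQ_surjective _
  have hker : ∀ x : N₂, q x = 0 ↔ (x : M) ∈ N₁ := fun x => by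
    simp [hq]
  let P := N.comap q
  let c := P.map N₂.subtype
  have hle1 : N₁ ≤ c := fun x hx =>
    ⟨⟨x, h hx⟩, by
      change q _ ∈ N
      rw [(hker ⟨x, h hx⟩).2 hx]; exact N.zero_mem, rfl⟩
  have hle2 : c ≤ N₂ := Submodule.map_subtype_le _ _
  refine ⟨c, lt_of_le_of_ne hle1 ?_, lt_of_le_of_ne hle2 ?_, ?_⟩
  · intro he
    apply hN0
    rw [eq_bot_iff]
    intro y hy
    obtain ⟨x, rfl⟩ := hqs y
    have : (x : M) ∈ c := ⟨x, hy, rfl⟩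
    rw [← he] at this
    exact (hker x).2 this
  · intro he
    apply hN1
    rw [eq_top_iff]
    intro y _
    obtain ⟨x, rfl⟩ := hqs y
    have : (x : M) ∈ c := by rw [he]; exact x.2
    obtain ⟨x', hx', hxx⟩ := this
    have : x' = x := Subtype.ext hxx
    exact this ▸ hx'
  · have e : Z P = Z c :=
      Z_equiv hadd (Submodule.equivMapOfInjective N₂.subtype N₂.injective_subtype P)
    let g : P →ₗ[Aᵐᵒᵖ] N := q.restrict (fun x hx => hx)
    have hgs : Function.Surjective g := by
      rintro ⟨y, hy⟩
      obtain ⟨x, rfl⟩ := hqs y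
      exact ⟨⟨x, hy⟩, rfl⟩
    let f : N₁ →ₗ[Aᵐᵒᵖ] P := (Submodule.inclusion h).codRestrict P (fun x => by
      change q _ ∈ N
      rw [(hker _).2 x.2]; exact N.zero_mem)
    have hfi : Function.Injective f := fun x y hxy => by
      have := congrArg (fun t : P => ((t : N₂) : M)) hxy
      exact Subtype.ext this
    have hfg : LinearMap.range f = LinearMap.ker g := by
      ext x
      constructor
      · rintro ⟨y, rfl⟩
        exact Subtype.ext ((hker _).2 y.2)
      · intro hx
        have hx : q (x : N₂) = 0 := congrArg Subtype.val hx
        exact ⟨⟨_, (hker _).1 hx⟩, rfl⟩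
    have := hadd N₁ P N f g hfi hgs hfg
    rw [← e, this]; ring

end Mods

/-- Existence of Harder–Narasimhan filtrations for finite-dimensional modules over a
finite-dimensional `ℂ`-algebra `A`: if `Z` assigns a complex number to every
finite-dimensional (right) `A`-module, additively on short exact sequences, with
`Im Z(M) ≥ 0` for every nonzero `M` and `Re Z(M) < 0` whenever `Im Z(M) = 0`, then
every nonzero finite-dimensional `A`-module `M` admits a filtration by submodules
`0 = M₀ ⊊ M₁ ⊊ … ⊊ Mₙ = M` whose subquotients `A_i = M_i/M_{i−1}` are `Z`-semistable
with strictly decreasing slopes `μ(A₁) > … > μ(Aₙ)` (encoded by cross-multiplication: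
`μ(A_{i+1}) < μ(A_i)` iff `D(A_{i+1})·R(A_i) < D(A_i)·R(A_{i+1})`). -/
theorem module_hn_filtration_exists (A : Type) [Ring A] [Algebra ℂ A]
    [FiniteDimensional ℂ A]
    (Z : (M : Type) → [AddCommGroup M] → [Module Aᵐᵒᵖ M] → ℂ)
    (hadd : ∀ (M₁ M₂ M₃ : Type)
      [AddCommGroup M₁] [Module Aᵐᵒᵖ M₁] [Module.Finite Aᵐᵒᵖ M₁]
      [AddCommGroup M₂] [Module Aᵐᵒᵖ M₂] [Module.Finite Aᵐᵒᵖ M₂]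
      [AddCommGroup M₃] [Module Aᵐᵒᵖ M₃] [Module.Finite Aᵐᵒᵖ M₃]
      (f : M₁ →ₗ[Aᵐᵒᵖ] M₂) (g : M₂ →ₗ[Aᵐᵒᵖ] M₃),
      Function.Injective f → Function.Surjective g →
      LinearMap.range f = LinearMap.ker g → Z M₂ = Z M₁ + Z M₃)
    (hpos : ∀ (M : Type) [AddCommGroup M] [Module Aᵐᵒᵖ M] [Module.Finite Aᵐᵒᵖ M],
      Nontrivial M → 0 ≤ (Z M).im ∧ ((Z M).im = 0 → (Z M).re < 0))
    (M : Type) [AddCommGroup M] [Module Aᵐᵒᵖ M] [Module.Finite Aᵐᵒᵖ M]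
    (hM : Nontrivial M) :
    ∃ (n : ℕ) (F : ℕ → Submodule Aᵐᵒᵖ M),
      F 0 = ⊥ ∧ F n = ⊤ ∧ (∀ i, i < n → F i < F (i + 1)) ∧
      (∀ i, i < n → ModuleSemistable Z (subquotient (F i) (F (i + 1)))) ∧
      ∀ i, i + 1 < n →
        -(Z (subquotient (F (i + 1)) (F (i + 2)))).re *
            (Z (subquotient (F i) (F (i + 1)))).im <
          -(Z (subquotient (F i) (F (i + 1)))).re *
            (Z (subquotient (F (i + 1)) (F (i + 2)))).im := by
  haveI : IsNoetherian ℂ Aᵐᵒᵖ := inferInstance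
  haveI : IsNoetherianRing Aᵐᵒᵖ := isNoetherian_of_tower ℂ inferInstance
  haveI : IsArtinianRing Aᵐᵒᵖ := IsArtinianRing.of_finite ℂ Aᵐᵒᵖ
  have hadd' : ZAdd Z := hadd
  have hnt : ∀ a b : Submodule Aᵐᵒᵖ M, a < b → Nontrivial (subquotient a b) := fun a b hab => by
    rw [Submodule.Quotient.nontrivial_iff]
    intro he
    exact hab.not_ge (Submodule.comap_subtype_eq_top.1 he)
  obtain ⟨n, F, h0, h1, hlt, hss, hdec⟩ := lattice_hn (fun N : Submodule Aᵐᵒᵖ M => Z N)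
    (Z_mod hadd') (fun a b hab => by
      rw [← Z_subquot hadd' hab.le]
      exact hpos _ (hnt a b hab))
  refine ⟨n, F, h0, h1, hlt, fun i hi => ⟨hnt _ _ (hlt i hi), fun N hN0 hN1 => ?_⟩,
    fun i hi => ?_⟩
  · obtain ⟨c, hc1, hc2, hc⟩ := Z_sub_of_subquot hadd' (hlt i hi).le N hN0 hN1
    rw [hc, Z_subquot hadd' (hlt i hi).le]
    exact hss i hi c hc1 hc2
  · rw [Z_subquot hadd' (hlt i (by omega)).le, Z_subquot hadd' (hlt (i + 1) hi).le]
    exact hdec i hi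

end BridgelandNotes
end
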